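/- Let S ∈ ℤ^{m×n}, u ∈ ℕ^m, with δ_n(S) ≠ 0, and suppose K_u = {x ∈ ℝⁿ : Sx ≤ u} satisfies K_u ∩ ℤⁿ = {0} and every relaxation of K_u obtained by removing one inequality contains a nonzero lattice point. Then 0 ≤ u_i ≤ 2M(n+2)·Δ_n(S)/δ_n(S) for every i, where M = max_i ‖s^{(i)}‖₁. -/

import Mathlib

/-!
Write `Δ` and `δ` for the upper and lower bounds on the maximal minors. If some real `x` satisfied
`S x ≤ u - M`, then rounding `x` coordinatewise, up or down, would produce a nonzero lattice point
of `K_u`. So `S x ≤ u - M` is infeasible, and by Helly's theorem `n + 1` of its rows already are.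
The only linear dependency `λ` between these rows is given by their maximal minors, so infeasibility
forces the entries of `λ` to have a common sign and yields `∑ |λ_j| u_j < M ∑ |λ_j|`. This bounds
`u_i` for each chosen row `i`. For any other row `i`, take a nonzero lattice point `z` violating
only `S_i z ≤ u_i`: the relation `∑ λ_j S_j z = 0` together with `S_j z ≤ u_j` controls
`∑ |λ_j| |S_j z|`, and exchanging the chosen row with the largest `|λ_j|` for row `i` gives a
dependency that expresses `S_i z > u_i` in terms of the numbers `S_j z`.
-/

open Matrix Function

section SignedMinor

variable {n : ℕ}

/-- The signed maximal minors of an `(n + 1) × n` matrix, i.e. the coefficients of the linear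
dependency between its rows provided by Cramer's rule. The `j`-th one omits row `j`. -/
def signedMinor {R : Type*} [CommRing R] (A : Matrix (Fin (n + 1)) (Fin n) R) (j : Fin (n + 1)) :
    R :=
  (-1) ^ (j : ℕ) * (A.submatrix j.succAbove id).det

section CommRing

variable {R : Type*} [CommRing R]

lemma signedMinor_vecMul (A : Matrix (Fin (n + 1)) (Fin n) R) : signedMinor A ᵥ* A = 0 := by
  ext c
  -- Duplicating column `c` gives a singular square matrix; expand it along the added column.
  let B : Matrix (Fin (n + 1)) (Fin (n + 1)) R := of fun j => Fin.cons (A j c) (A j)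
  have hB : B.det = 0 :=
    det_zero_of_column_eq (Fin.succ_ne_zero c).symm fun k => by simp [B]
  have hminor (j : Fin (n + 1)) :
      B.submatrix j.succAbove Fin.succ = A.submatrix j.succAbove id := by
    ext a b
    simp [B]
  rw [det_succ_column_zero] at hB
  simp only [hminor] at hB
  rw [Pi.zero_apply, ← hB, vecMul, dotProduct]
  refine Finset.sum_congr rfl fun j _ => ?_
  simp only [signedMinor, B, of_apply, Fin.cons_zero]
  ring

lemma signedMinor_dotProduct_mulVec (A : Matrix (Fin (n + 1)) (Fin n) R) (x : Fin n → R) :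
    signedMinor A ⬝ᵥ A *ᵥ x = 0 := by
  rw [dotProduct_mulVec, signedMinor_vecMul, zero_dotProduct]

lemma signedMinor_updateRow_self (A : Matrix (Fin (n + 1)) (Fin n) R) (l : Fin (n + 1))
    (r : Fin n → R) : signedMinor (A.updateRow l r) l = signedMinor A l := by
  rw [signedMinor, submatrix_updateRow_succAbove, signedMinor]

end CommRing

lemma exists_mulVec_eq_of_signedMinor_dotProduct_eq_zero {K : Type*} [Field K]
    {A : Matrix (Fin (n + 1)) (Fin n) K} {l : Fin (n + 1)} (hl : signedMinor A l ≠ 0)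
    {y : Fin (n + 1) → K} (hy : signedMinor A ⬝ᵥ y = 0) : ∃ x, A *ᵥ x = y := by
  have hunit : IsUnit (A.submatrix l.succAbove id) :=
    (isUnit_iff_isUnit_det _).2 (right_ne_zero_of_mul hl).isUnit
  obtain ⟨x, hx⟩ := mulVec_surjective_iff_isUnit.2 hunit (y ∘ l.succAbove)
  have hrest (j : Fin n) : (A *ᵥ x) (l.succAbove j) = y (l.succAbove j) := congrFun hx j
  have hx0 := signedMinor_dotProduct_mulVec A x
  rw [dotProduct, Fin.sum_univ_succAbove _ l] at hx0 hy
  simp only [hrest] at hx0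
  have hrow : (A *ᵥ x) l = y l := mul_left_cancel₀ hl (add_right_cancel (hx0.trans hy.symm))
  exact ⟨x, funext ((Fin.forall_iff_succAbove l).2 ⟨hrow, hrest⟩)⟩

lemma abs_signedMinor {R : Type*} [CommRing R] [LinearOrder R] [IsStrictOrderedRing R]
    (A : Matrix (Fin (n + 1)) (Fin n) R) (j : Fin (n + 1)) :
    |signedMinor A j| = |(A.submatrix j.succAbove id).det| := by
  simp [signedMinor, abs_mul]

end SignedMinor

section Infeasible

lemma card_lt_of_forall_not_mulVec_le {K ι κ : Type*} [Field K] [Preorder K] [Fintype ι]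
    [Fintype κ] [DecidableEq κ] {S : Matrix ι κ K} {b : ι → K}
    (hcard : Fintype.card κ ≤ Fintype.card ι)
    (hdet : ∀ f : κ → ι, Injective f → (S.submatrix f id).det ≠ 0) (hS : ∀ x, ¬ S *ᵥ x ≤ b) :
    Fintype.card κ < Fintype.card ι := by
  refine hcard.lt_of_ne fun heq => ?_
  let e := Fintype.equivOfCardEq heq
  have hunit : IsUnit (S.submatrix e id) :=
    (isUnit_iff_isUnit_det _).2 (hdet e e.injective).isUnit
  obtain ⟨x, hx⟩ := mulVec_surjective_iff_isUnit.2 hunit (b ∘ e)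
  refine hS x fun k => ?_
  have hrow : (S *ᵥ x) (e (e.symm k)) = b (e (e.symm k)) := congrFun hx (e.symm k)
  rw [e.apply_symm_apply] at hrow
  exact hrow.le

variable {K : Type*} [Field K] [LinearOrder K] [IsStrictOrderedRing K]

lemma pos_or_neg_of_forall_le_dotProduct_ne_zero {ι : Type*} [Fintype ι] {a b : ι → K}
    (ha : ∀ j, a j ≠ 0) (hab : ∀ y ≤ b, a ⬝ᵥ y ≠ 0) :
    ((∀ j, 0 < a j) ∧ a ⬝ᵥ b < 0) ∨ ((∀ j, a j < 0) ∧ 0 < a ⬝ᵥ b) := by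
  classical
  have hratio (j : ι) : a ⬝ᵥ b / a j < 0 := by
    by_contra! hj
    -- Lowering the single entry `b j` by the ratio solves `a ⬝ᵥ y = 0`.
    refine hab (b - Pi.single j (a ⬝ᵥ b / a j)) (sub_le_self b (Pi.single_nonneg.2 hj)) ?_
    rw [dotProduct_sub, dotProduct_single, mul_div_cancel₀ _ (ha j), sub_self]
  rcases (hab b le_rfl).lt_or_gt with hneg | hpos
  · refine .inl ⟨fun j => ?_, hneg⟩
    exact lt_of_not_ge fun hj => (hratio j).not_ge (div_nonneg_of_nonpos hneg.le hj)
  · refine .inr ⟨fun j => ?_, hpos⟩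
    exact lt_of_not_ge fun hj => (hratio j).not_ge (div_nonneg hpos.le hj)

lemma abs_signedMinor_vecMul_eq_zero_and_dotProduct_neg {n : ℕ} {A : Matrix (Fin (n + 1)) (Fin n) K}
    {b : Fin (n + 1) → K} (hA : ∀ j, signedMinor A j ≠ 0) (hb : ∀ x, ¬ A *ᵥ x ≤ b) :
    |signedMinor A| ᵥ* A = 0 ∧ |signedMinor A| ⬝ᵥ b < 0 := by
  have hne : ∀ y ≤ b, signedMinor A ⬝ᵥ y ≠ 0 := fun y hyb hy => by
    obtain ⟨x, rfl⟩ := exists_mulVec_eq_of_signedMinor_dotProduct_eq_zero (hA 0) hy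
    exact hb x hyb
  rcases pos_or_neg_of_forall_le_dotProduct_ne_zero hA hne with ⟨hpos, hlt⟩ | ⟨hneg, hgt⟩
  · rw [abs_of_nonneg fun j => (hpos j).le]
    exact ⟨signedMinor_vecMul A, hlt⟩
  · rw [abs_of_nonpos fun j => (hneg j).le, neg_vecMul, neg_dotProduct]
    exact ⟨by rw [signedMinor_vecMul, neg_zero], neg_neg_of_pos hgt⟩

lemma exists_injective_forall_not_submatrix_mulVec_le {ι : Type*} [Fintype ι] {n : ℕ}
    {S : Matrix ι (Fin n) K} {b : ι → K} (hcard : n < Fintype.card ι) (hS : ∀ x, ¬ S *ᵥ x ≤ b) :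
    ∃ g : Fin (n + 1) → ι, Injective g ∧ ∀ x, ¬ S.submatrix g id *ᵥ x ≤ b ∘ g := by
  by_contra! hfeas
  obtain ⟨x, hx⟩ : (⋂ k ∈ Finset.univ, {x | (S *ᵥ x) k ≤ b k}).Nonempty := by
    refine Convex.helly_theorem (𝕜 := K) (by simpa using hcard) (fun k _ => ?_) fun I _ hI => ?_
    · exact convex_halfSpace_le ((LinearMap.proj k).comp S.mulVecLin).isLinear _
    · let e := I.equivFinOfCardEq (hI.trans (by rw [Module.finrank_fin_fun]))
      obtain ⟨x, hx⟩ := hfeas (fun j => e.symm j) (Subtype.val_injective.comp e.symm.injective)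
      refine ⟨x, Set.mem_iInter₂.2 fun k hk => ?_⟩
      have hrow : (S *ᵥ x) (e.symm (e ⟨k, hk⟩)) ≤ b (e.symm (e ⟨k, hk⟩)) := hx (e ⟨k, hk⟩)
      rwa [e.symm_apply_apply] at hrow
  exact hS x fun k => Set.mem_iInter₂.1 hx k (Finset.mem_univ k)

lemma exists_injective_abs_signedMinor_vecMul_eq_zero_and_dotProduct_neg {ι : Type*} [Fintype ι]
    {n : ℕ} {S : Matrix ι (Fin n) K} {b : ι → K} (hcard : n ≤ Fintype.card ι)
    (hdet : ∀ f : Fin n → ι, Injective f → (S.submatrix f id).det ≠ 0)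
    (hS : ∀ x, ¬ S *ᵥ x ≤ b) :
    ∃ g : Fin (n + 1) → ι, Injective g ∧
      |signedMinor (S.submatrix g id)| ᵥ* S.submatrix g id = 0 ∧
      |signedMinor (S.submatrix g id)| ⬝ᵥ (b ∘ g) < 0 := by
  have hn : n < Fintype.card ι := by
    simpa using card_lt_of_forall_not_mulVec_le (by simpa using hcard) hdet hS
  obtain ⟨g, hg, hgx⟩ := exists_injective_forall_not_submatrix_mulVec_le hn hS
  refine ⟨g, hg, abs_signedMinor_vecMul_eq_zero_and_dotProduct_neg (fun j => ?_) hgx⟩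
  rw [← abs_ne_zero, abs_signedMinor, abs_ne_zero]
  exact hdet (g ∘ j.succAbove) (hg.comp Fin.succAbove_right_injective)

end Infeasible

section LatticePoints

lemma exists_ne_zero_abs_intCast_sub_le_one {R κ : Type*} [CommRing R] [LinearOrder R]
    [IsStrictOrderedRing R] [FloorRing R] [Nonempty κ] (x : κ → R) :
    ∃ z : κ → ℤ, z ≠ 0 ∧ ∀ j, |(z j : R) - x j| ≤ 1 := by
  by_cases hfloor : (fun j => ⌊x j⌋) = 0
  · refine ⟨fun j => ⌊x j⌋ + 1, fun h => ?_, fun j => ?_⟩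
    · obtain ⟨j⟩ := ‹Nonempty κ›
      have h0 : ⌊x j⌋ = 0 := congrFun hfloor j
      have h1 : ⌊x j⌋ + 1 = 0 := congrFun h j
      omega
    · push_cast
      rw [abs_le]
      constructor <;> linarith [Int.floor_le (x j), Int.lt_floor_add_one (x j)]
  · refine ⟨_, hfloor, fun j => ?_⟩
    rw [abs_le]
    constructor <;> linarith [Int.floor_le (x j), Int.lt_floor_add_one (x j)]

lemma exists_ne_zero_mulVec_intCast_le {R ι κ : Type*} [CommRing R] [LinearOrder R]
    [IsStrictOrderedRing R] [FloorRing R] [Fintype κ] [Nonempty κ] {S : Matrix ι κ R} {u : ι → R}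
    {M : R} (hM : ∀ i, ∑ j, |S i j| ≤ M) {x : κ → R} (hx : S *ᵥ x ≤ u - fun _ => M) :
    ∃ z : κ → ℤ, z ≠ 0 ∧ S *ᵥ (fun j => (z j : R)) ≤ u := by
  obtain ⟨z, hz0, hz⟩ := exists_ne_zero_abs_intCast_sub_le_one x
  refine ⟨z, hz0, fun i => ?_⟩
  calc (S *ᵥ fun j => (z j : R)) i
      = (S *ᵥ x) i + ∑ j, S i j * (z j - x j) := by
        simp only [mulVec, dotProduct, mul_sub, Finset.sum_sub_distrib, add_sub_cancel]
    _ ≤ (S *ᵥ x) i + ∑ j, |S i j| := by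
        gcongr with j
        calc S i j * (z j - x j) ≤ |S i j| * |z j - x j| := abs_mul (S i j) _ ▸ le_abs_self _
          _ ≤ |S i j| := mul_le_of_le_one_right (abs_nonneg _) (hz j)
    _ ≤ (u i - M) + M := add_le_add (hx i) (hM i)
    _ = u i := sub_add_cancel _ _

lemma card_le_card_of_forall_mulVec_le_imp_eq_zero {R ι κ : Type*} [CommRing R] [Nontrivial R]
    [Preorder R] [Fintype ι] [Fintype κ] {S : Matrix ι κ R} {u : ι → R} (hu : 0 ≤ u)
    (hS : ∀ z, S *ᵥ z ≤ u → z = 0) : Fintype.card κ ≤ Fintype.card ι := by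
  refine card_le_of_injective R S.mulVecLin ((injective_iff_map_eq_zero _).2 fun z hz => hS z ?_)
  rw [← mulVecLin_apply, hz]
  exact hu

lemma exists_injective_abs_signedMinor_dotProduct_lt_mul_sum {K ι : Type*} [Field K]
    [LinearOrder K] [IsStrictOrderedRing K] [FloorRing K] [Fintype ι] {n : ℕ} [Nonempty (Fin n)]
    {S : Matrix ι (Fin n) K} {u : ι → K} {M : K} (hcard : n ≤ Fintype.card ι)
    (hdet : ∀ f : Fin n → ι, Injective f → (S.submatrix f id).det ≠ 0)
    (hM : ∀ i, ∑ j, |S i j| ≤ M)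
    (hlat : ∀ z : Fin n → ℤ, S *ᵥ (fun j => (z j : K)) ≤ u → z = 0) :
    ∃ g : Fin (n + 1) → ι, Injective g ∧
      |signedMinor (S.submatrix g id)| ᵥ* S.submatrix g id = 0 ∧
      |signedMinor (S.submatrix g id)| ⬝ᵥ (u ∘ g) <
        M * ∑ j, |signedMinor (S.submatrix g id) j| := by
  have hinfeasible (x : Fin n → K) : ¬ S *ᵥ x ≤ u - fun _ => M := fun hx =>
    let ⟨z, hz0, hz⟩ := exists_ne_zero_mulVec_intCast_le hM hx
    hz0 (hlat z hz)
  obtain ⟨g, hg, hker, hneg⟩ :=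
    exists_injective_abs_signedMinor_vecMul_eq_zero_and_dotProduct_neg hcard hdet hinfeasible
  refine ⟨g, hg, hker, ?_⟩
  simp only [dotProduct, Function.comp_apply, Pi.abs_apply, Pi.sub_apply, mul_sub,
    Finset.sum_sub_distrib, ← Finset.sum_mul] at hneg ⊢
  linarith

end LatticePoints

section Estimates

variable {R : Type*} [CommRing R] [LinearOrder R] [IsStrictOrderedRing R]

lemma dotProduct_abs_le_two_mul_dotProduct {ι : Type*} [Fintype ι] {w p u : ι → R} (hw : 0 ≤ w)
    (hu : 0 ≤ u) (hpu : p ≤ u) (hwp : w ⬝ᵥ p = 0) : w ⬝ᵥ |p| ≤ 2 * (w ⬝ᵥ u) := by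
  have habs : |p| + p ≤ u + u := fun j => by
    rcases abs_cases (p j) with h | h <;>
      simp only [Pi.add_apply, Pi.abs_apply] <;> linarith [hpu j, show 0 ≤ u j from hu j]
  calc w ⬝ᵥ |p| = w ⬝ᵥ (|p| + p) := by rw [dotProduct_add, hwp, add_zero]
    _ ≤ w ⬝ᵥ (u + u) := dotProduct_le_dotProduct_of_nonneg_left habs hw
    _ = 2 * (w ⬝ᵥ u) := by rw [dotProduct_add, two_mul]

lemma mul_apply_le_of_dotProduct_le_mul_sum {ι : Type*} [Fintype ι] {w u : ι → R} {δ Δ M : R}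
    (hu : 0 ≤ u) (hM : 0 ≤ M) (hδ : 0 ≤ δ) (hδw : ∀ j, δ ≤ w j) (hwΔ : ∀ j, w j ≤ Δ)
    (h : w ⬝ᵥ u ≤ M * ∑ j, w j) (l : ι) : δ * u l ≤ M * (Fintype.card ι * Δ) :=
  calc δ * u l ≤ w l * u l := mul_le_mul_of_nonneg_right (hδw l) (hu l)
    _ ≤ w ⬝ᵥ u :=
      Finset.single_le_sum (f := fun j => w j * u j)
        (fun j _ => mul_nonneg (hδ.trans (hδw j)) (hu j)) (Finset.mem_univ l)
    _ ≤ M * ∑ j, w j := h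
    _ ≤ M * (Fintype.card ι * Δ) := by
      gcongr
      simpa using Finset.sum_le_card_nsmul Finset.univ w Δ fun j _ => hwΔ j

lemma abs_signedMinor_mul_abs_dotProduct_le {n : ℕ} (A : Matrix (Fin (n + 1)) (Fin n) R)
    (l : Fin (n + 1)) (r x : Fin n → R) {Δ : R}
    (hΔ : ∀ j, |signedMinor (A.updateRow l r) j| ≤ Δ) :
    |signedMinor A l| * |r ⬝ᵥ x| ≤ Δ * ∑ j, |(A *ᵥ x) j| := by
  have hΔ0 : 0 ≤ Δ := (abs_nonneg _).trans (hΔ l)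
  have hdep := signedMinor_dotProduct_mulVec (A.updateRow l r) x
  rw [dotProduct, Fin.sum_univ_succAbove _ l, signedMinor_updateRow_self] at hdep
  have hself : (A.updateRow l r *ᵥ x) l = r ⬝ᵥ x := by simp [mulVec]
  have hother (j : Fin n) : (A.updateRow l r *ᵥ x) (l.succAbove j) = (A *ᵥ x) (l.succAbove j) := by
    simp [mulVec]
  simp only [hself, hother] at hdep
  calc |signedMinor A l| * |r ⬝ᵥ x|
      = |∑ j, signedMinor (A.updateRow l r) (l.succAbove j) * (A *ᵥ x) (l.succAbove j)| := by
        rw [← abs_mul, eq_neg_of_add_eq_zero_left hdep, abs_neg]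
    _ ≤ ∑ j, Δ * |(A *ᵥ x) (l.succAbove j)| := by
        refine (Finset.abs_sum_le_sum_abs _ _).trans (Finset.sum_le_sum fun j _ => ?_)
        rw [abs_mul]
        gcongr
        exact hΔ _
    _ ≤ Δ * ∑ j, |(A *ᵥ x) j| := by
        rw [← Finset.mul_sum, Fin.sum_univ_succAbove _ l]
        gcongr
        exact le_add_of_nonneg_left (abs_nonneg _)

lemma mul_dotProduct_le_of_signedMinor_updateRow_le {n : ℕ} {A : Matrix (Fin (n + 1)) (Fin n) R}
    {u : Fin (n + 1) → R} {r x : Fin n → R} {δ Δ M : R} (hu : 0 ≤ u) (hM : 0 ≤ M) (hδ : 0 < δ)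
    (hδA : ∀ j, δ ≤ |signedMinor A j|) (hΔ : ∀ l j, |signedMinor (A.updateRow l r) j| ≤ Δ)
    (hker : |signedMinor A| ᵥ* A = 0) (hle : |signedMinor A| ⬝ᵥ u ≤ M * ∑ j, |signedMinor A j|)
    (hx : A *ᵥ x ≤ u) : δ * (r ⬝ᵥ x) ≤ 2 * (M * ((n + 1) * Δ)) := by
  -- The largest minor bounds all the others and cancels once its row is exchanged for `r`.
  obtain ⟨l, hl⟩ := Finite.exists_max |signedMinor A|
  have hΔ0 : 0 ≤ Δ := (abs_nonneg _).trans (hΔ l l)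
  have hl0 : 0 < |signedMinor A l| := hδ.trans_le (hδA l)
  have horth : |signedMinor A| ⬝ᵥ A *ᵥ x = 0 := by rw [dotProduct_mulVec, hker, zero_dotProduct]
  have hsum : δ * ∑ j, |(A *ᵥ x) j| ≤ 2 * (M * ((n + 1) * |signedMinor A l|)) :=
    calc δ * ∑ j, |(A *ᵥ x) j| ≤ |signedMinor A| ⬝ᵥ |A *ᵥ x| := by
          rw [Finset.mul_sum]
          exact Finset.sum_le_sum fun j _ => mul_le_mul_of_nonneg_right (hδA j) (abs_nonneg _)
      _ ≤ 2 * (|signedMinor A| ⬝ᵥ u) :=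
          dotProduct_abs_le_two_mul_dotProduct (abs_nonneg _) hu hx horth
      _ ≤ 2 * (M * ∑ j, |signedMinor A j|) := by gcongr
      _ ≤ 2 * (M * ((n + 1) * |signedMinor A l|)) := by
          gcongr
          simpa using Finset.sum_le_card_nsmul Finset.univ (|signedMinor A ·|) _ fun j _ => hl j
  refine le_of_mul_le_mul_left ?_ hl0
  calc |signedMinor A l| * (δ * (r ⬝ᵥ x)) = δ * (|signedMinor A l| * (r ⬝ᵥ x)) := by ring
    _ ≤ δ * (|signedMinor A l| * |r ⬝ᵥ x|) := by gcongr; exact le_abs_self _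
    _ ≤ δ * (Δ * ∑ j, |(A *ᵥ x) j|) := by
        have hexchange := abs_signedMinor_mul_abs_dotProduct_le A l r x (hΔ l)
        exact mul_le_mul_of_nonneg_left hexchange hδ.le
    _ = Δ * (δ * ∑ j, |(A *ᵥ x) j|) := by ring
    _ ≤ Δ * (2 * (M * ((n + 1) * |signedMinor A l|))) := by gcongr
    _ = |signedMinor A l| * (2 * (M * ((n + 1) * Δ))) := by ring

end Estimates

lemma injective_update_of_notMem_range {α β : Type*} [DecidableEq α] {g : α → β} (hg : Injective g)
    {b : β} (hb : b ∉ Set.range g) (a : α) : Injective (update g a b) := by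
  intro x y hxy
  grind [Injective, update_apply]

lemma submatrix_update_eq_updateRow {R ι κ ν : Type*} [DecidableEq ν] (S : Matrix ι κ R)
    (g : ν → ι) (l : ν) (i : ι) :
    S.submatrix (update g l i) id = (S.submatrix g id).updateRow l (S i) := by
  ext j c
  by_cases hj : j = l <;> simp [hj]

theorem stmt_5_general {K ι : Type*} [Field K] [LinearOrder K] [IsStrictOrderedRing K]
    [FloorRing K] [Fintype ι] {n : ℕ} (S : Matrix ι (Fin n) K) (u : ι → K) (Δ δ M : K)
    (hu : 0 ≤ u) (hcard : n ≤ Fintype.card ι) (hδ : 0 < δ)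
    (hsub : ∀ f : Fin n → ι, Injective f →
      δ ≤ |(S.submatrix f id).det| ∧ |(S.submatrix f id).det| ≤ Δ)
    (hM : ∀ i, ∑ j, |S i j| ≤ M)
    (hlat : ∀ z : Fin n → ℤ, S *ᵥ (fun j => (z j : K)) ≤ u → z = 0)
    (i : ι)
    (hremove : ∃ z : Fin n → ℤ, z ≠ 0 ∧ ∀ k, k ≠ i → (S *ᵥ fun j => (z j : K)) k ≤ u k) :
    u i ≤ 2 * M * (n + 1) * (Δ / δ) := by
  classical
  have hM0 : 0 ≤ M := (Finset.sum_nonneg fun j _ => abs_nonneg (S i j)).trans (hM i)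
  obtain ⟨z, hz0, hz⟩ := hremove
  have : Nonempty (Fin n) := not_isEmpty_iff.1 fun _ => hz0 (Subsingleton.elim z 0)
  have hdet (f : Fin n → ι) (hf : Injective f) : (S.submatrix f id).det ≠ 0 :=
    abs_pos.1 (hδ.trans_le (hsub f hf).1)
  have hminor (f : Fin (n + 1) → ι) (hf : Injective f) (j : Fin (n + 1)) :
      δ ≤ |signedMinor (S.submatrix f id) j| ∧ |signedMinor (S.submatrix f id) j| ≤ Δ := by
    rw [abs_signedMinor]
    exact hsub (f ∘ j.succAbove) (hf.comp Fin.succAbove_right_injective)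
  obtain ⟨g, hg, hker, hlt⟩ :=
    exists_injective_abs_signedMinor_dotProduct_lt_mul_sum hcard hdet hM hlat
  suffices δ * u i ≤ 2 * (M * ((n + 1) * Δ)) by
    rw [← mul_div_assoc, le_div_iff₀ hδ]
    linarith
  by_cases hi : i ∈ Set.range g
  · obtain ⟨l, rfl⟩ := hi
    have hbound := mul_apply_le_of_dotProduct_le_mul_sum (fun j => hu (g j)) hM0 hδ.le
      (fun j => (hminor g hg j).1) (fun j => (hminor g hg j).2) hlt.le l
    simp only [Fintype.card_fin, Nat.cast_add, Nat.cast_one] at hbound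
    have hgu : 0 ≤ δ * u (g l) := mul_nonneg hδ.le (hu (g l))
    linarith
  · have hui : u i < (S *ᵥ fun j => (z j : K)) i := by
      by_contra! hzi
      exact hz0 (hlat z fun k => (eq_or_ne k i).elim (fun hk => hk ▸ hzi) (hz k))
    refine (mul_le_mul_of_nonneg_left hui.le hδ.le).trans ?_
    refine mul_dotProduct_le_of_signedMinor_updateRow_le (fun j => hu (g j)) hM0 hδ
      (fun j => (hminor g hg j).1) (fun l j => ?_) hker hlt.le fun j => hz (g j) fun h => hi ⟨j, h⟩
    rw [← submatrix_update_eq_updateRow]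
    exact (hminor _ (injective_update_of_notMem_range hg hi l) j).2

/-- Kannan's theorem: if `K_u = {x : Sx ≤ u}` contains exactly one lattice point (the
origin) and removing any single defining inequality brings in a nonzero lattice point,
and `δ_n(S) ≠ 0`, then `0 ≤ u_i ≤ 2M(n+2)·Δ_n(S)/δ_n(S)` for every `i`. -/
theorem stmt_5 (m n : ℕ) (S : Matrix (Fin m) (Fin n) ℤ) (u : Fin m → ℕ)
    (Δ δ M : ℝ) (hδ : 0 < δ)
    (hsub : ∀ f : Fin n → Fin m, Function.Injective f →
      δ ≤ |((S.submatrix f id).det : ℝ)| ∧ |((S.submatrix f id).det : ℝ)| ≤ Δ)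
    (hM : ∀ i, ∑ j, |(S i j : ℝ)| ≤ M)
    (hlat : ∀ z : Fin n → ℤ,
      (∀ i, ∑ j, (S i j : ℝ) * (z j : ℝ) ≤ (u i : ℝ)) → z = 0)
    (hremove : ∀ i : Fin m, ∃ z : Fin n → ℤ, z ≠ 0 ∧
      ∀ k, k ≠ i → ∑ j, (S k j : ℝ) * (z j : ℝ) ≤ (u k : ℝ)) :
    ∀ i, (0 : ℝ) ≤ (u i : ℝ) ∧ (u i : ℝ) ≤ 2 * M * (n + 2) * (Δ / δ) := by
  intro i
  refine ⟨Nat.cast_nonneg _, ?_⟩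
  have hmn : n ≤ Fintype.card (Fin m) := by
    simpa using card_le_card_of_forall_mulVec_le_imp_eq_zero (S := S) (u := fun i => (u i : ℤ))
      (fun i => Nat.cast_nonneg _) fun z hz => hlat z fun i => by exact_mod_cast hz i
  have hbound := stmt_5_general (S.map ((↑) : ℤ → ℝ)) (fun i => (u i : ℝ)) Δ δ M
    (fun _ => Nat.cast_nonneg _) hmn hδ
    (fun f hf => by simpa only [Int.cast_det] using! hsub f hf) hM hlat i (hremove i)
  have hnonneg : 0 ≤ M * (Δ / δ) :=
    nonneg_of_mul_nonneg_right (a := 2 * ((n : ℝ) + 1)) (by linarith [(u i).cast_nonneg (α := ℝ)])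
      (by positivity)
  linarith
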